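/- If φ satisfies the coercivity condition φ(u) ≥ −B d²(u,v) − Q(v) for all u,v ∈ X with Q(v) := B d²(v,u_*) + A, then the WED slope is dominated by the local slope: |∂_w φ|(x) := limsup_{ε↓0} G_ε(x) ≤ |∂φ|(x) for every x ∈ D(φ). -/

import Mathlib

/-!
Let `L` exceed the local slope at `x`. Near `x` the definition of the slope gives
`φ(v) ≥ φ(x) - L d(x,v)`, and away from `x` the quadratic coercivity gives
`φ(v) ≥ φ(x) - C d(x,v)²` for a large constant `C`; together they yield the global minorant
`φ(v) ≥ φ(x) - L d(x,v) - C d(x,v)²` (`exists_minorant`).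

For an admissible curve with speed `m`, the distance `d(x, u(t))` is at most the length
`D(t) = ∫₀ᵗ m`. Tonelli's theorem gives `∫ D dμ_ε = ε ∫ m dμ_ε`, and a weighted Cauchy–Schwarz
inequality followed by Tonelli gives the Hardy-type bound `∫ D² dμ_ε ≤ 4ε² ∫ m² dμ_ε`
(`length_moments`). Hence, with `k = 1 - 8Cε` and Young's inequality `L m ≤ L²/(2k) + k m²/2`,
`I_ε[u] ≥ φ(x) + (ε/2) k ∫ m² dμ_ε - ε L ∫ m dμ_ε ≥ φ(x) - ε L²/(2k)` (`WEDfun_lower_bound`).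
So `G_ε(x)² ≤ L²/(1 - 8Cε)` (`Geps_le`), and letting `ε ↓ 0` and then `L` decrease to the slope
proves the claim. The constant curve shows `V_ε(x) < ∞`.
-/

open MeasureTheory Filter Topology Set ENNReal

noncomputable section

namespace WED

variable {X : Type*} [MetricSpace X]

/-- The exponential probability measure `μ_ε = ε⁻¹ e^{-t/ε} dt` on `(0,∞)`. -/
def expMeasure (ε : ℝ) : Measure ℝ :=
  (volume.restrict (Ioi (0:ℝ))).withDensity fun t => ENNReal.ofReal (ε⁻¹ * Real.exp (-t / ε))

/-- The positive part of an extended real, as an extended nonnegative real. -/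
def epos (x : EReal) : ℝ≥0∞ := if x = ⊤ then ⊤ else ENNReal.ofReal x.toReal

/-- The absolute value of an extended real, as an extended nonnegative real. -/
def eabs (x : EReal) : ℝ≥0∞ := epos x ⊔ epos (-x)

/-- The (extended-real valued) integral of an extended-real valued function, defined as the
difference between the integrals of the positive and of the negative part. -/
def eIntegral (μ : Measure ℝ) (f : ℝ → EReal) : EReal :=
  ((∫⁻ t, epos (f t) ∂μ : ℝ≥0∞) : EReal) - ((∫⁻ t, epos (-f t) ∂μ : ℝ≥0∞) : EReal)

/-- `m` is *the* metric derivative of the curve `u` on the set `I ⊆ ℝ`:  `m` is a nonnegative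
locally integrable function, `d(u s, u t) ≤ ∫_s^t m` (so that `u` is absolutely continuous),
and `m t` is the limit of the difference quotients `d(u s, u t)/|s-t|` at a.e. `t ∈ I`. -/
structure IsMetricDerivOn (u : ℝ → X) (m : ℝ → ℝ) (I : Set ℝ) : Prop where
  nonneg : ∀ t, 0 ≤ m t
  locInt : ∀ s ∈ I, ∀ t ∈ I, IntegrableOn m (Icc s t) volume
  dist_le : ∀ s ∈ I, ∀ t ∈ I, s ≤ t → dist (u s) (u t) ≤ ∫ r in Icc s t, m r
  limit : ∀ᵐ t ∂(volume.restrict I),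
    Tendsto (fun s => dist (u s) (u t) / |s - t|) (𝓝[I \ {t}] t) (𝓝 (m t))

/-- `u ∈ AC²_loc(I; X)`, with metric derivative `m`. -/
def AC2LocOn (u : ℝ → X) (m : ℝ → ℝ) (I : Set ℝ) : Prop :=
  IsMetricDerivOn u m I ∧ ∀ s ∈ I, ∀ t ∈ I, IntegrableOn (fun r => m r ^ 2) (Icc s t) volume

/-- `u ∈ AC²(I; X)`, with metric derivative `m`. -/
def AC2On (u : ℝ → X) (m : ℝ → ℝ) (I : Set ℝ) : Prop :=
  IsMetricDerivOn u m I ∧ IntegrableOn (fun r => m r ^ 2) I volume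

/-- The integrand `(ε/2)|u'|²(t) + φ(u(t))` of the WED functional. -/
def wedIntegrand (φ : X → EReal) (ε : ℝ) (u : ℝ → X) (m : ℝ → ℝ) (t : ℝ) : EReal :=
  ((ε / 2 * m t ^ 2 : ℝ) : EReal) + φ (u t)

/-- The WED functional `I_ε[u] = ∫₀^∞ ((ε/2)|u'|² + φ(u)) dμ_ε`. -/
def WEDfun (φ : X → EReal) (ε : ℝ) (u : ℝ → X) (m : ℝ → ℝ) : EReal :=
  eIntegral (expMeasure ε) (wedIntegrand φ ε u m)

/-- The admissible class `𝒜_x^ε`: curves `u ∈ AC²_loc([0,∞);X)` (with metric derivative `m`)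
with `u 0 = x` and `∫₀^∞ |u'|² dμ_ε < ∞`. -/
def Admissible (ε : ℝ) (x : X) (u : ℝ → X) (m : ℝ → ℝ) : Prop :=
  u 0 = x ∧ AC2LocOn u m (Ici 0) ∧
    (∫⁻ t, ENNReal.ofReal (m t ^ 2) ∂expMeasure ε) < ⊤

/-- The value function `V_ε(x) = inf { I_ε[u] : u ∈ 𝒜_x^ε }`. -/
def Veps (φ : X → EReal) (ε : ℝ) (x : X) : EReal :=
  ⨅ (p : {p : (ℝ → X) × (ℝ → ℝ) // Admissible ε x p.1 p.2}),
    WEDfun φ ε p.1.1 p.1.2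

/-- `u` (with metric derivative `m`) minimizes the WED functional `I_ε` over `𝒜_x^ε`. -/
def IsMinimizer (φ : X → EReal) (ε : ℝ) (x : X) (u : ℝ → X) (m : ℝ → ℝ) : Prop :=
  Admissible ε x u m ∧
    ∀ v n, Admissible ε x v n → WEDfun φ ε u m ≤ WEDfun φ ε v n

/-- The compatibility conditions (MT1), (MT2) between the distance `d` and the auxiliary
topology `σ`. -/
structure Compatible (σ : TopologicalSpace X) : Prop where
  mt1 : ∀ (u v : ℕ → X) (x y : X), Tendsto u atTop (@nhds X σ x) →
    Tendsto v atTop (@nhds X σ y) →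
    ENNReal.ofReal (dist x y) ≤ Filter.liminf (fun n => ENNReal.ofReal (dist (u n) (v n))) atTop
  mt2 : ∀ U : Set X, IsOpen[σ] U → ∀ x ∈ U, ∃ V : Set X, IsOpen[σ] V ∧ x ∈ V ∧
    ∃ δ : ℝ, 0 < δ ∧ ∀ y : X, Metric.infDist y V < δ → y ∈ U

/-- The standard lower semicontinuity–compactness–coercivity (LSCC) assumptions on a proper
functional `φ : X → (-∞,∞]`, with respect to the auxiliary topology `σ`. -/
structure LSCC (σ : TopologicalSpace X) (φ : X → EReal) (ustar : X) (A B : ℝ) : Prop where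
  hA : 0 ≤ A
  hB : 0 ≤ B
  proper : ∃ x, φ x ≠ ⊤
  ne_bot : ∀ x, φ x ≠ ⊥
  lsc : ∀ (u : ℕ → X) (x : X), (∃ C : ℝ, ∀ n k, dist (u n) (u k) ≤ C) →
    Tendsto u atTop (@nhds X σ x) → φ x ≤ Filter.liminf (fun n => φ (u n)) atTop
  cpt : ∀ u : ℕ → X, (∃ C : ℝ, ∀ n, φ (u n) ≤ (C : EReal)) →
    (∃ C : ℝ, ∀ n k, dist (u n) (u k) ≤ C) →
    ∃ (x : X) (j : ℕ → ℕ), StrictMono j ∧ Tendsto (u ∘ j) atTop (@nhds X σ x)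
  coercive : ∀ u v : X, ((-(B * dist u v ^ 2 + (B * dist v ustar ^ 2 + A)) : ℝ) : EReal) ≤ φ u

/-- The local (descending) slope `|∂φ|(x) = limsup_{v→x} (φ(x)-φ(v))⁺/d(x,v)`. -/
def slope (φ : X → EReal) (x : X) : ℝ≥0∞ :=
  Filter.limsup (fun v => epos (φ x - φ v) / ENNReal.ofReal (dist x v)) (𝓝[≠] x)

/-- The relaxed slope `|∂⁻φ|`: the σ-sequential lower semicontinuous envelope of the local
slope along `d`-bounded sequences with bounded energy. -/
def relaxedSlope (σ : TopologicalSpace X) (φ : X → EReal) (x : X) : ℝ≥0∞ :=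
  ⨅ (u : ℕ → X) (_ : Tendsto u atTop (@nhds X σ x))
    (_ : ∃ C : ℝ, ∀ n, dist (u n) x ≤ C ∧ φ (u n) ≤ (C : EReal)),
    Filter.liminf (fun n => slope φ (u n)) atTop

/-- `G_ε(x) = sqrt(2(φ(x) - V_ε(x))/ε)` if `V_ε(x) < ∞`, and `∞` otherwise. -/
def Geps (φ : X → EReal) (ε : ℝ) (x : X) : ℝ≥0∞ :=
  if Veps φ ε x = ⊤ then ⊤
  else (2 * epos (φ x - Veps φ ε x) / ENNReal.ofReal ε) ^ (1/2 : ℝ)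

/-- The measure `|u'| dt` on `I` associated with the speed `m` of a curve. -/
def speedMeasure (m : ℝ → ℝ) (I : Set ℝ) : Measure ℝ :=
  (volume.restrict I).withDensity fun t => ENNReal.ofReal (m t)

/-- Membership in `L^p(μ)`, `p ∈ [1,∞]`, for an `ℝ≥0∞`-valued function. -/
def MemLpENN (f : ℝ → ℝ≥0∞) (p : ℝ≥0∞) (μ : Measure ℝ) : Prop :=
  if p = ⊤ then ∃ C : ℝ≥0∞, C ≠ ⊤ ∧ ∀ᵐ t ∂μ, f t ≤ C
  else (∫⁻ t, f t ^ p.toReal ∂μ) < ⊤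

/-- `g` is an `L^p`-moderated upper gradient for `φ`: for every absolutely continuous curve
`u` (with metric derivative `m`) on a compact interval such that `φ∘u ∈ L^p(|u'|dt)` and
`g∘u ∈ L¹(|u'|dt)`, one has `|φ(u t) - φ(u s)| ≤ ∫_s^t g(u r) |u'|(r) dr`. -/
def IsModeratedUpperGradient (φ : X → EReal) (g : X → ℝ≥0∞) (p : ℝ≥0∞) : Prop :=
  ∀ (a b : ℝ), a ≤ b → ∀ (u : ℝ → X) (m : ℝ → ℝ), IsMetricDerivOn u m (Icc a b) →
    MemLpENN (fun t => eabs (φ (u t))) p (speedMeasure m (Icc a b)) →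
    (∫⁻ t in Icc a b, g (u t) * ENNReal.ofReal (m t)) < ⊤ →
    ∀ s ∈ Icc a b, ∀ t ∈ Icc a b, s ≤ t →
      (φ (u t) ≤ φ (u s) + ((∫⁻ r in Icc s t, g (u r) * ENNReal.ofReal (m r) : ℝ≥0∞) : EReal) ∧
       φ (u s) ≤ φ (u t) + ((∫⁻ r in Icc s t, g (u r) * ENNReal.ofReal (m r) : ℝ≥0∞) : EReal))

/-- A real function `f` is locally absolutely continuous on `[0,∞)` with density `g`. -/
def RealACLoc (f g : ℝ → ℝ) : Prop :=
  (∀ b : ℝ, 0 ≤ b → IntegrableOn g (Icc 0 b) volume) ∧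
  ∀ t : ℝ, 0 ≤ t → f t = f 0 + ∫ r in Icc 0 t, g r

/-- A real function `f` belongs to `AC²_loc([0,∞);ℝ)`, with derivative `g`. -/
def RealAC2Loc (f g : ℝ → ℝ) : Prop :=
  RealACLoc f g ∧ ∀ b : ℝ, 0 ≤ b → IntegrableOn (fun t => g t ^ 2) (Icc 0 b) volume

/-- The compact-open topology on curves `[0,∞) → X` induced by the auxiliary topology `σ`. -/
def compactOpenOf (σ : TopologicalSpace X) : TopologicalSpace (ℝ → X) :=
  TopologicalSpace.generateFrom
    {S | ∃ (K : Set ℝ) (U : Set X), K ⊆ Ici 0 ∧ IsCompact K ∧ IsOpen[σ] U ∧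
      S = {f : ℝ → X | MapsTo f K U}}

/-- The WED slope `|∂_w φ|(x) = limsup_{ε↓0} G_ε(x)`. -/
def wedSlope (φ : X → EReal) (x : X) : ℝ≥0∞ :=
  Filter.limsup (fun ε => Geps φ ε x) (𝓝[>] (0:ℝ))

/-- The relaxed WED slope `|∂_w^- φ|`. -/
def relaxedWedSlope (σ : TopologicalSpace X) (φ : X → EReal) (x : X) : ℝ≥0∞ :=
  ⨅ (u : ℕ → X) (_ : Tendsto u atTop (@nhds X σ x))
    (_ : ∃ C : ℝ, ∀ n, dist (u n) x ≤ C ∧ φ (u n) ≤ (C : EReal)),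
    Filter.liminf (fun n => wedSlope φ (u n)) atTop

/-- The φ-conditioned local slope `|∂̃ψ|(x) = limsup_{v→x, φ(v)→φ(x)} (ψ(x)-ψ(v))⁺/d(x,v)`. -/
def condSlope (φ ψ : X → EReal) (x : X) : ℝ≥0∞ :=
  Filter.limsup (fun v => epos (ψ x - ψ v) / ENNReal.ofReal (dist x v))
    ((𝓝[≠] x) ⊓ Filter.comap φ (𝓝 (φ x)))

/-- `φ` is geodesically `λ`-convex: every pair of points of `D(φ)` is joined by a
constant-speed geodesic along which `φ` is `λ`-convex. -/
def GeodesicLambdaConvex (φ : X → EReal) (lam : ℝ) : Prop :=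
  ∀ v₀ v₁ : X, φ v₀ ≠ ⊤ → φ v₁ ≠ ⊤ → ∃ γ : ℝ → X, γ 0 = v₀ ∧ γ 1 = v₁ ∧
    (∀ s ∈ Icc (0:ℝ) 1, ∀ t ∈ Icc (0:ℝ) 1, dist (γ s) (γ t) = |t - s| * dist v₀ v₁) ∧
    ∀ t ∈ Icc (0:ℝ) 1, φ (γ t) ≤ ((1 - t : ℝ) : EReal) * φ v₀ + ((t : ℝ) : EReal) * φ v₁ -
      ((lam / 2 * t * (1 - t) * dist v₀ v₁ ^ 2 : ℝ) : EReal)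

end WED

namespace WED

/-! ### Integrals against the exponential measure -/

lemma lintegral_expMeasure (ε : ℝ) (f : ℝ → ℝ≥0∞) :
    ∫⁻ t, f t ∂expMeasure ε
      = ∫⁻ t in Ioi (0:ℝ), ENNReal.ofReal (ε⁻¹ * Real.exp (-t / ε)) * f t := by
  rw [expMeasure, lintegral_withDensity_eq_lintegral_mul_non_measurable _ (by fun_prop)
    (Eventually.of_forall fun _ => ENNReal.ofReal_lt_top)]
  rfl

lemma lintegral_exp_tail {a : ℝ} (ha : 0 < a) (s : ℝ) :
    ∫⁻ t in Ici s, ENNReal.ofReal (Real.exp (-a * t)) = ENNReal.ofReal (a⁻¹ * Real.exp (-a * s)) := by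
  rw [setLIntegral_congr Ioi_ae_eq_Ici.symm, ← ofReal_integral_eq_lintegral_ofReal
    (exp_neg_integrableOn_Ioi s ha) (Eventually.of_forall fun _ => (Real.exp_pos _).le),
    integral_exp_mul_Ioi (by linarith)]
  congr 1
  field_simp

lemma lintegral_exp_head {a : ℝ} (ha : 0 < a) (t : ℝ) :
    ∫⁻ s in Ioc 0 t, ENNReal.ofReal (Real.exp (a * s)) ≤ ENNReal.ofReal (a⁻¹ * Real.exp (a * t)) := by
  calc ∫⁻ s in Ioc 0 t, ENNReal.ofReal (Real.exp (a * s))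
      ≤ ∫⁻ s in Iic t, ENNReal.ofReal (Real.exp (a * s)) :=
        lintegral_mono_set Ioc_subset_Iic_self
    _ = ENNReal.ofReal (a⁻¹ * Real.exp (a * t)) := by
        rw [← ofReal_integral_eq_lintegral_ofReal
          (integrableOn_exp_mul_Iic ha t) (Eventually.of_forall fun _ => (Real.exp_pos _).le),
          integral_exp_mul_Iic ha]
        congr 1
        field_simp

lemma isProbabilityMeasure_expMeasure {ε : ℝ} (hε : 0 < ε) :
    IsProbabilityMeasure (expMeasure ε) := by
  constructor
  rw [← lintegral_one, lintegral_expMeasure]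
  have h := lintegral_exp_tail (inv_pos.2 hε) 0
  rw [setLIntegral_congr Ioi_ae_eq_Ici.symm] at h
  simp only [mul_one]
  calc _ = ∫⁻ t in Ioi (0:ℝ), ENNReal.ofReal ε⁻¹ * ENNReal.ofReal (Real.exp (-ε⁻¹ * t)) := by
        refine lintegral_congr fun t => ?_
        rw [ENNReal.ofReal_mul (by positivity)]
        congr 3
        ring
    _ = 1 := by
        rw [lintegral_const_mul _ (by fun_prop), h, ← ENNReal.ofReal_mul (by positivity)]
        simp [hε.ne']

/-- Integration by parts for an exponential weight, obtained from Tonelli's theorem. -/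
lemma lintegral_exp_mul_primitive {a : ℝ} (ha : 0 < a) {F : ℝ → ℝ≥0∞}
    (hF : AEMeasurable F (volume.restrict (Ioi (0:ℝ)))) :
    ∫⁻ t in Ioi (0:ℝ), ENNReal.ofReal (Real.exp (-a * t)) * ∫⁻ s in Ioc 0 t, F s
      = ∫⁻ s in Ioi (0:ℝ), ENNReal.ofReal (a⁻¹ * Real.exp (-a * s)) * F s := by
  have h1 : ∀ t : ℝ, ENNReal.ofReal (Real.exp (-a * t)) * ∫⁻ s in Ioc 0 t, F s
      = ∫⁻ s in Ioi (0:ℝ), {p : ℝ × ℝ | p.2 ≤ p.1}.indicator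
          (fun p => ENNReal.ofReal (Real.exp (-a * p.1)) * F p.2) (t, s) := by
    intro t
    rw [← lintegral_const_mul' _ _ ENNReal.ofReal_ne_top, ← Ioi_inter_Iic, inter_comm,
      ← Measure.restrict_restrict measurableSet_Iic, ← lintegral_indicator measurableSet_Iic]
    rfl
  simp_rw [h1]
  rw [lintegral_lintegral_swap]
  · refine setLIntegral_congr_fun measurableSet_Ioi fun s (hs : 0 < s) => ?_
    rw [← lintegral_exp_tail ha, ← lintegral_mul_const _ (by fun_prop),
      show Ici s = Ici s ∩ Ioi 0 from
        (inter_eq_left.2 fun t (ht : s ≤ t) => lt_of_lt_of_le hs ht).symm,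
      ← Measure.restrict_restrict measurableSet_Ici, ← lintegral_indicator measurableSet_Ici]
    rfl
  · refine AEMeasurable.indicator (AEMeasurable.mul (by fun_prop) hF.comp_snd) ?_
    exact measurableSet_le measurable_snd measurable_fst

/-- The first moment identity `∫ (∫₀ᵗ F) dμ_ε(t) = ε ∫ F dμ_ε`. -/
lemma lintegral_expMeasure_primitive {ε : ℝ} (hε : 0 < ε) {F : ℝ → ℝ≥0∞}
    (hF : AEMeasurable F (volume.restrict (Ioi (0:ℝ)))) :
    ∫⁻ t, ∫⁻ s in Ioc 0 t, F s ∂volume ∂expMeasure ε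
      = ENNReal.ofReal ε * ∫⁻ t, F t ∂expMeasure ε := by
  have hw : ∀ t : ℝ, ENNReal.ofReal (ε⁻¹ * Real.exp (-t / ε))
      = ENNReal.ofReal ε⁻¹ * ENNReal.ofReal (Real.exp (-ε⁻¹ * t)) := by
    intro t
    rw [ENNReal.ofReal_mul (by positivity)]
    congr 3
    ring
  have hw' : ∀ t : ℝ, ENNReal.ofReal (ε⁻¹⁻¹ * Real.exp (-ε⁻¹ * t))
      = ENNReal.ofReal ε * ENNReal.ofReal (Real.exp (-ε⁻¹ * t)) := by
    intro t
    rw [ENNReal.ofReal_mul (by positivity), inv_inv]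
  simp_rw [lintegral_expMeasure, hw, mul_assoc]
  rw [lintegral_const_mul' _ _ ENNReal.ofReal_ne_top,
    lintegral_const_mul' _ _ ENNReal.ofReal_ne_top, lintegral_exp_mul_primitive (inv_pos.2 hε) hF]
  simp_rw [hw', mul_assoc]
  rw [lintegral_const_mul' _ _ ENNReal.ofReal_ne_top]
  ring

/-- Cauchy–Schwarz against the weight `e^{at}`, which trades `(∫₀ᵗ F)²` for a primitive of `F²`. -/
lemma sq_primitive_le {a : ℝ} (ha : 0 < a) {F : ℝ → ℝ≥0∞}
    (hF : AEMeasurable F (volume.restrict (Ioi (0:ℝ)))) (t : ℝ) :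
    (∫⁻ s in Ioc 0 t, F s) ^ 2 ≤ ENNReal.ofReal (a⁻¹ * Real.exp (a * t)) *
      ∫⁻ s in Ioc 0 t, ENNReal.ofReal (Real.exp (-a * s)) * F s ^ 2 := by
  have hF' : AEMeasurable F (volume.restrict (Ioc 0 t)) :=
    hF.mono_measure (Measure.restrict_mono Ioc_subset_Ioi_self le_rfl)
  have h := ENNReal.lintegral_mul_le_Lp_mul_Lq (volume.restrict (Ioc 0 t))
    Real.HolderConjugate.two_two
    (f := fun s => ENNReal.ofReal (Real.exp (a / 2 * s)))
    (g := fun s => ENNReal.ofReal (Real.exp (-(a / 2 * s))) * F s) (by fun_prop)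
    (AEMeasurable.mul (by fun_prop) hF')
  have e1 : ∀ s, ((fun s => ENNReal.ofReal (Real.exp (a / 2 * s))) *
      (fun s => ENNReal.ofReal (Real.exp (-(a / 2 * s))) * F s)) s = F s := by
    intro s
    simp only [Pi.mul_apply]
    rw [← mul_assoc, ← ENNReal.ofReal_mul (by positivity), ← Real.exp_add]
    simp
  have e2 : ∀ s, ENNReal.ofReal (Real.exp (a / 2 * s)) ^ (2:ℝ)
      = ENNReal.ofReal (Real.exp (a * s)) := by
    intro s
    rw [ENNReal.rpow_two, ← ENNReal.ofReal_pow (by positivity), ← Real.exp_nat_mul]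
    congr 2
    push_cast
    ring
  have e3 : ∀ s, (ENNReal.ofReal (Real.exp (-(a / 2 * s))) * F s) ^ (2:ℝ)
      = ENNReal.ofReal (Real.exp (-a * s)) * F s ^ 2 := by
    intro s
    rw [ENNReal.rpow_two, mul_pow, ← ENNReal.ofReal_pow (by positivity), ← Real.exp_nat_mul]
    congr 3
    push_cast
    ring
  simp_rw [e1, e2, e3] at h
  have e4 : ∀ y : ℝ≥0∞, (y ^ (1 / 2 : ℝ)) ^ 2 = y := by
    intro y
    rw [← ENNReal.rpow_two, ← ENNReal.rpow_mul]
    norm_num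
  calc (∫⁻ s in Ioc 0 t, F s) ^ 2 ≤ _ := pow_le_pow_left₀ zero_le h 2
    _ ≤ _ := by
      rw [mul_pow, e4, e4]
      gcongr
      exact lintegral_exp_head ha t

/-- Hardy's inequality for the exponential measure. -/
lemma lintegral_expMeasure_sq_primitive_le {ε : ℝ} (hε : 0 < ε) {F : ℝ → ℝ≥0∞}
    (hF : AEMeasurable F (volume.restrict (Ioi (0:ℝ)))) :
    ∫⁻ t, (∫⁻ s in Ioc 0 t, F s ∂volume) ^ 2 ∂expMeasure ε
      ≤ ENNReal.ofReal (4 * ε ^ 2) * ∫⁻ t, F t ^ 2 ∂expMeasure ε := by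
  -- half of the exponential decay is spent on the Cauchy–Schwarz weight
  set a : ℝ := (2 * ε)⁻¹ with ha_def
  have ha : 0 < a := by positivity
  have haε : a⁻¹ = 2 * ε := by rw [ha_def, inv_inv]
  have hexp : ∀ t : ℝ, -t / ε = -a * t + -a * t := by
    intro t
    rw [ha_def]
    field_simp
    ring
  rw [lintegral_expMeasure, lintegral_expMeasure]
  calc ∫⁻ t in Ioi (0:ℝ), ENNReal.ofReal (ε⁻¹ * Real.exp (-t / ε)) * (∫⁻ s in Ioc 0 t, F s) ^ 2
      ≤ ∫⁻ t in Ioi (0:ℝ), ENNReal.ofReal 2 * (ENNReal.ofReal (Real.exp (-a * t)) *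
          ∫⁻ s in Ioc 0 t, ENNReal.ofReal (Real.exp (-a * s)) * F s ^ 2) := by
        refine lintegral_mono fun t => ?_
        refine (mul_le_mul_right (sq_primitive_le ha hF t) _).trans (le_of_eq ?_)
        rw [← mul_assoc, ← mul_assoc, ← ENNReal.ofReal_mul (by positivity),
          ← ENNReal.ofReal_mul (by positivity)]
        congr 2
        rw [haε, hexp, Real.exp_add]
        have : Real.exp (-a * t) * Real.exp (a * t) = 1 := by
          rw [← Real.exp_add]; simp
        generalize Real.exp (-a * t) = E at *
        calc ε⁻¹ * (E * E) * (2 * ε * Real.exp (a * t))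
            = 2 * (ε⁻¹ * ε) * E * (E * Real.exp (a * t)) := by ring
          _ = 2 * E := by rw [this, inv_mul_cancel₀ hε.ne']; ring
    _ = ENNReal.ofReal 2 * ∫⁻ s in Ioi (0:ℝ), ENNReal.ofReal (a⁻¹ * Real.exp (-a * s)) *
          (ENNReal.ofReal (Real.exp (-a * s)) * F s ^ 2) := by
        rw [lintegral_const_mul' _ _ ENNReal.ofReal_ne_top, lintegral_exp_mul_primitive ha]
        exact AEMeasurable.mul (by fun_prop) (hF.pow_const 2)
    _ = _ := by
        rw [← lintegral_const_mul' _ _ ENNReal.ofReal_ne_top,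
          ← lintegral_const_mul' _ _ ENNReal.ofReal_ne_top]
        refine lintegral_congr fun t => ?_
        rw [← mul_assoc, ← mul_assoc, ← mul_assoc, ← ENNReal.ofReal_mul (by positivity),
          ← ENNReal.ofReal_mul (by positivity), ← ENNReal.ofReal_mul (by positivity)]
        congr 2
        rw [haε, hexp, Real.exp_add]
        field_simp
        ring


/-! ### Lower bound on the functional -/

lemma epos_coe (r : ℝ) : epos (r : EReal) = ENNReal.ofReal r := by
  simp [epos]

lemma epos_mono {a b : EReal} (h : a ≤ b) : epos a ≤ epos b := by
  induction b with
  | top => simp [epos]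
  | bot => rw [le_bot_iff.1 h]
  | coe b =>
    induction a with
    | top => simp at h
    | bot => simp [epos]
    | coe a =>
      rw [epos_coe, epos_coe]
      exact ENNReal.ofReal_le_ofReal (EReal.coe_le_coe_iff.1 h)

/-- For an integrable real function, `eIntegral` is the Bochner integral. -/
lemma eIntegral_coe {μ : Measure ℝ} {g : ℝ → ℝ} (hg : Integrable g μ) :
    eIntegral μ (fun t => (g t : EReal)) = ((∫ t, g t ∂μ : ℝ) : EReal) := by
  have h1 := hg.lintegral_lt_top
  have h2 := hg.neg.lintegral_lt_top
  simp only [eIntegral, ← EReal.coe_neg, epos_coe]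
  rw [integral_eq_lintegral_pos_part_sub_lintegral_neg_part hg, EReal.coe_sub]
  congr 1
  · exact (EReal.coe_toReal (by simpa using h1.ne) (by simp)).symm.trans (by simp)
  · exact (EReal.coe_toReal (by simpa using h2.ne) (by simp)).symm.trans (by simp)

lemma eIntegral_mono {μ : Measure ℝ} {f g : ℝ → EReal} (h : ∀ᵐ t ∂μ, f t ≤ g t) :
    eIntegral μ f ≤ eIntegral μ g := by
  refine EReal.sub_le_sub ?_ ?_
  · exact EReal.coe_ennreal_le_coe_ennreal_iff.2
      (lintegral_mono_ae (h.mono fun t ht => epos_mono ht))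
  · exact EReal.coe_ennreal_le_coe_ennreal_iff.2
      (lintegral_mono_ae (h.mono fun t ht => epos_mono (EReal.neg_le_neg_iff.2 ht)))

lemma ae_expMeasure_pos (ε : ℝ) : ∀ᵐ t ∂expMeasure ε, 0 < t :=
  (withDensity_absolutelyContinuous _ _).ae_le (ae_restrict_mem measurableSet_Ioi)

/-- Along a speed `m` with `∫ m² dμ_ε < ∞`, the length `D(t) = ∫₀ᵗ m` satisfies
`∫ D dμ_ε = ε ∫ m dμ_ε` and `∫ D² dμ_ε ≤ 4ε² ∫ m² dμ_ε`, all functions being integrable. -/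
lemma length_moments {ε : ℝ} (hε : 0 < ε) {m : ℝ → ℝ} (hm0 : ∀ t, 0 ≤ m t)
    (hmi : ∀ t, 0 ≤ t → IntegrableOn m (Icc 0 t) volume)
    (hm2 : (∫⁻ t, ENNReal.ofReal (m t ^ 2) ∂expMeasure ε) < ⊤) :
    Integrable m (expMeasure ε) ∧ Integrable (fun t => m t ^ 2) (expMeasure ε) ∧
    Integrable (fun t => ∫ r in Icc 0 t, m r) (expMeasure ε) ∧
    Integrable (fun t => (∫ r in Icc 0 t, m r) ^ 2) (expMeasure ε) ∧
    ∫ t, (∫ r in Icc 0 t, m r) ∂expMeasure ε = ε * ∫ t, m t ∂expMeasure ε ∧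
    ∫ t, (∫ r in Icc 0 t, m r) ^ 2 ∂expMeasure ε ≤ 4 * ε ^ 2 * ∫ t, m t ^ 2 ∂expMeasure ε := by
  have := isProbabilityMeasure_expMeasure hε
  have hmeas : AEMeasurable m (volume.restrict (Ioi (0:ℝ))) := by
    have hcov : Ioi (0:ℝ) ⊆ ⋃ n : ℕ, Icc (0:ℝ) n := by
      intro t ht
      obtain ⟨n, hn⟩ := exists_nat_ge t
      exact mem_iUnion.2 ⟨n, le_of_lt ht, hn⟩
    refine AEMeasurable.mono_measure ?_ (Measure.restrict_mono hcov le_rfl)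
    exact aemeasurable_iUnion_iff.2 fun n => (hmi n n.cast_nonneg).aemeasurable
  have hmeas' : AEMeasurable m (expMeasure ε) :=
    hmeas.mono_ac (withDensity_absolutelyContinuous _ _)
  set D : ℝ → ℝ := fun t => ∫ r in Icc 0 t, m r with hD
  have hmi' : ∀ t, IntegrableOn m (Icc 0 t) volume := by
    intro t
    rcases le_or_gt 0 t with h | h
    · exact hmi t h
    · simp [Icc_eq_empty (not_le.2 h)]
  have hD0 : ∀ t, 0 ≤ D t := fun t => integral_nonneg hm0
  have hDmono : Monotone D := fun s t hst =>
    setIntegral_mono_set (hmi' t) (Eventually.of_forall hm0)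
      (Icc_subset_Icc le_rfl hst).eventuallyLE
  have hDe : ∀ t, ENNReal.ofReal (D t) = ∫⁻ s in Ioc 0 t, ENNReal.ofReal (m s) := by
    intro t
    rw [setLIntegral_congr Ioc_ae_eq_Icc]
    exact ofReal_integral_eq_lintegral_ofReal (hmi' t) (Eventually.of_forall hm0)
  have hF : AEMeasurable (fun t => ENNReal.ofReal (m t)) (volume.restrict (Ioi (0:ℝ))) :=
    hmeas.ennreal_ofReal
  have hI2 : Integrable (fun t => m t ^ 2) (expMeasure ε) := by
    refine ⟨(hmeas'.pow_const 2).aestronglyMeasurable, ?_⟩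
    rwa [hasFiniteIntegral_iff_ofReal (Eventually.of_forall fun t => sq_nonneg _)]
  have hI1 : Integrable m (expMeasure ε) := by
    refine ((integrable_const (1:ℝ)).add hI2).mono' hmeas'.aestronglyMeasurable ?_
    refine Eventually.of_forall fun t => ?_
    rw [Real.norm_of_nonneg (hm0 t)]
    simp only [Pi.add_apply]
    nlinarith [sq_nonneg (m t - 1)]
  have hlD : ∫⁻ t, ENNReal.ofReal (D t) ∂expMeasure ε
      = ENNReal.ofReal (ε * ∫ t, m t ∂expMeasure ε) := by
    simp_rw [hDe]
    rw [lintegral_expMeasure_primitive hε hF, ENNReal.ofReal_mul hε.le,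
      ofReal_integral_eq_lintegral_ofReal hI1 (Eventually.of_forall hm0)]
  have hlD2 : ∫⁻ t, ENNReal.ofReal (D t ^ 2) ∂expMeasure ε
      ≤ ENNReal.ofReal (4 * ε ^ 2 * ∫ t, m t ^ 2 ∂expMeasure ε) := by
    simp_rw [fun t => ENNReal.ofReal_pow (hD0 t) 2, hDe]
    refine (lintegral_expMeasure_sq_primitive_le hε hF).trans (le_of_eq ?_)
    rw [ENNReal.ofReal_mul (p := 4 * ε ^ 2) (by positivity),
      ofReal_integral_eq_lintegral_ofReal hI2 (Eventually.of_forall fun t => sq_nonneg _)]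
    simp_rw [fun t => ENNReal.ofReal_pow (hm0 t) 2]
  have hJ1 : Integrable D (expMeasure ε) := by
    refine ⟨hDmono.measurable.aestronglyMeasurable, ?_⟩
    rw [hasFiniteIntegral_iff_ofReal (Eventually.of_forall hD0), hlD]
    exact ENNReal.ofReal_lt_top
  have hJ2 : Integrable (fun t => D t ^ 2) (expMeasure ε) := by
    refine ⟨(hDmono.measurable.pow_const 2).aestronglyMeasurable, ?_⟩
    rw [hasFiniteIntegral_iff_ofReal (Eventually.of_forall fun t => sq_nonneg _)]
    exact hlD2.trans_lt ENNReal.ofReal_lt_top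
  refine ⟨hI1, hI2, hJ1, hJ2, ?_, ?_⟩
  · rw [← ofReal_integral_eq_lintegral_ofReal hJ1 (Eventually.of_forall hD0),
      ENNReal.ofReal_eq_ofReal_iff (integral_nonneg hD0)
        (mul_nonneg hε.le (integral_nonneg hm0))] at hlD
    exact hlD
  · rw [← ofReal_integral_eq_lintegral_ofReal hJ2 (Eventually.of_forall fun t => sq_nonneg _),
      ENNReal.ofReal_le_ofReal_iff
        (mul_nonneg (by positivity) (integral_nonneg fun t => sq_nonneg _))] at hlD2
    exact hlD2

/-- If `φ` lies above the cone-paraboloid `p - L d(x,·) - C d(x,·)²`, then every admissible curve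
has energy at least `p - εL²/(2(1-8Cε))`. -/
lemma WEDfun_lower_bound {X : Type*} [MetricSpace X] {φ : X → EReal} {x : X} {p L C ε : ℝ}
    (hL : 0 ≤ L) (hC : 0 ≤ C) (hε : 0 < ε) (hεC : 8 * C * ε < 1)
    (hφ : ∀ v, ((p - L * dist x v - C * dist x v ^ 2 : ℝ) : EReal) ≤ φ v)
    {u : ℝ → X} {m : ℝ → ℝ} (hu : Admissible ε x u m) :
    ((p - ε * (L ^ 2 / (2 * (1 - 8 * C * ε))) : ℝ) : EReal) ≤ WEDfun φ ε u m := by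
  obtain ⟨hu0, ⟨hder, -⟩, hfin⟩ := hu
  have := isProbabilityMeasure_expMeasure hε
  obtain ⟨hI1, hI2, hJ1, hJ2, hD1, hD2⟩ := length_moments hε hder.nonneg
    (fun t ht => hder.locInt 0 self_mem_Ici t ht) hfin
  set D : ℝ → ℝ := fun t => ∫ r in Icc 0 t, m r with hD
  have hD1' : ∫ t, D t ∂expMeasure ε = ε * ∫ t, m t ∂expMeasure ε := hD1
  have hJ2' : Integrable (fun t => D t ^ 2) (expMeasure ε) := hJ2
  have hD2' : ∫ t, D t ^ 2 ∂expMeasure ε ≤ 4 * ε ^ 2 * ∫ t, m t ^ 2 ∂expMeasure ε := hD2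
  have hg1 : Integrable (fun t => ε / 2 * m t ^ 2 + p) (expMeasure ε) :=
    (hI2.const_mul (ε / 2)).add (integrable_const p)
  have hg2 : Integrable (fun t => ε / 2 * m t ^ 2 + p - L * D t) (expMeasure ε) :=
    hg1.sub (hJ1.const_mul L)
  have hg3 : Integrable (fun t => ε / 2 * m t ^ 2 + p - L * D t - C * D t ^ 2) (expMeasure ε) :=
    hg2.sub (hJ2'.const_mul C)
  have hle : eIntegral (expMeasure ε)
      (fun t => ((ε / 2 * m t ^ 2 + p - L * D t - C * D t ^ 2 : ℝ) : EReal))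
        ≤ WEDfun φ ε u m := by
    refine eIntegral_mono ((ae_expMeasure_pos ε).mono fun t ht => ?_)
    have hd : dist x (u t) ≤ D t := by
      have := hder.dist_le 0 self_mem_Ici t (le_of_lt ht) (le_of_lt ht)
      rwa [hu0] at this
    calc ((ε / 2 * m t ^ 2 + p - L * D t - C * D t ^ 2 : ℝ) : EReal)
        ≤ ((ε / 2 * m t ^ 2 + (p - L * dist x (u t) - C * dist x (u t) ^ 2) : ℝ) : EReal) := by
          rw [EReal.coe_le_coe_iff]
          have h1 := mul_le_mul_of_nonneg_left hd hL
          have h2 := mul_le_mul_of_nonneg_left (pow_le_pow_left₀ dist_nonneg hd 2) hC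
          linarith
      _ ≤ wedIntegrand φ ε u m t := by
          rw [EReal.coe_add]
          exact add_le_add le_rfl (hφ _)
  refine le_trans ?_ hle
  rw [eIntegral_coe hg3, EReal.coe_le_coe_iff]
  have hint : ∫ t, (ε / 2 * m t ^ 2 + p - L * D t - C * D t ^ 2) ∂expMeasure ε
      = ε / 2 * ∫ t, m t ^ 2 ∂expMeasure ε + p - L * ∫ t, D t ∂expMeasure ε
        - C * ∫ t, D t ^ 2 ∂expMeasure ε := by
    rw [integral_sub hg2 (hJ2'.const_mul C), integral_sub hg1 (hJ1.const_mul L),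
      integral_add (hI2.const_mul _) (integrable_const _)]
    simp only [integral_const_mul]
    simp
  -- `k` is the fraction of the kinetic energy left over by the quadratic term
  set k : ℝ := 1 - 8 * C * ε with hk
  have hk0 : 0 < k := by linarith
  have hyoung : L * ∫ t, m t ∂expMeasure ε
      ≤ L ^ 2 / (2 * k) + k / 2 * ∫ t, m t ^ 2 ∂expMeasure ε := by
    have h := integral_mono (hI1.const_mul L)
      ((integrable_const (μ := expMeasure ε) (L ^ 2 / (2 * k))).add (hI2.const_mul (k / 2)))
      (fun t => by
        simp only [Pi.add_apply]
        have h : L ^ 2 / (2 * k) + k / 2 * m t ^ 2 - L * m t = (L - k * m t) ^ 2 / (2 * k) := by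
          field_simp
          ring
        have h' : 0 ≤ (L - k * m t) ^ 2 / (2 * k) := by positivity
        linarith)
    simp only [Pi.add_apply] at h
    rw [integral_add (integrable_const _) (hI2.const_mul _), integral_const_mul,
      integral_const_mul] at h
    simpa using h
  rw [hint, hD1']
  have h1 := mul_le_mul_of_nonneg_left hyoung hε.le
  have h2 := mul_le_mul_of_nonneg_left hD2' hC
  rw [hk] at h1 ⊢
  linarith

/-! ### Comparison with the slope -/

/-- The infinitesimal information of the slope and the quadratic coercivity combine into a global
cone-paraboloid minorant of `φ`, touching at `x`. -/
lemma exists_minorant {X : Type*} [MetricSpace X] {φ : X → EReal} {x : X} {p A B L : ℝ}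
    (hp : φ x = p) (hB : 0 ≤ B) (hL : 0 ≤ L)
    (hco : ∀ v, ((-(B * dist v x ^ 2 + A) : ℝ) : EReal) ≤ φ v)
    (hs : slope φ x < ENNReal.ofReal L) :
    ∃ C : ℝ, 0 ≤ C ∧ ∀ v, ((p - L * dist x v - C * dist x v ^ 2 : ℝ) : EReal) ≤ φ v := by
  have hev := eventually_lt_of_limsup_lt hs
  rw [eventually_nhdsWithin_iff, Metric.eventually_nhds_iff] at hev
  obtain ⟨δ, hδ, hev⟩ := hev
  refine ⟨B + |p + A| / δ ^ 2, by positivity, fun v => ?_⟩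
  have hC : 0 ≤ B + |p + A| / δ ^ 2 := by positivity
  rcases eq_or_ne v x with rfl | hvx
  · simp [hp]
  have hd : 0 < dist x v := dist_pos.2 hvx.symm
  rcases lt_or_ge (dist v x) δ with hlt | hge
  · have h := hev hlt hvx
    have hcv := hco v
    generalize φ v = y at h hcv
    induction y with
    | top => exact le_top
    | bot => exact absurd (le_bot_iff.1 hcv) (EReal.coe_ne_bot _)
    | coe y =>
      rw [hp, ← EReal.coe_sub, epos_coe] at h
      have h2 := (ENNReal.div_le_iff (by simpa using hvx.symm) ENNReal.ofReal_ne_top).1 h.le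
      rw [← ENNReal.ofReal_mul hL, ENNReal.ofReal_le_ofReal_iff (by positivity)] at h2
      rw [EReal.coe_le_coe_iff]
      nlinarith [mul_nonneg hC (sq_nonneg (dist x v))]
  · refine le_trans ?_ (hco v)
    rw [EReal.coe_le_coe_iff, dist_comm v x]
    rw [dist_comm v x] at hge
    have h1 : |p + A| ≤ |p + A| / δ ^ 2 * dist x v ^ 2 := by
      rw [div_mul_eq_mul_div, le_div_iff₀ (by positivity)]
      exact mul_le_mul_of_nonneg_left (pow_le_pow_left₀ hδ.le hge 2) (abs_nonneg _)
    have h2 := le_abs_self (p + A)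
    nlinarith [mul_nonneg hL hd.le]

lemma admissible_const {X : Type*} [MetricSpace X] (ε : ℝ) (x : X) :
    Admissible ε x (fun _ => x) (fun _ => 0) := by
  refine ⟨rfl, ⟨⟨fun _ => le_rfl, ?_, ?_, ?_⟩, ?_⟩, ?_⟩
  · intro s _ t _
    simp
  · intro s _ t _ _
    simp
  · simpa using Eventually.of_forall fun _ => tendsto_const_nhds
  · intro s _ t _
    simp
  · simp

lemma Veps_ne_top {X : Type*} [MetricSpace X] {φ : X → EReal} {x : X} {p ε : ℝ}
    (hp : φ x = p) (hε : 0 < ε) : Veps φ ε x ≠ ⊤ := by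
  have := isProbabilityMeasure_expMeasure hε
  refine ne_top_of_le_ne_top ?_
    (iInf_le _ (⟨(fun _ => x, fun _ => 0), admissible_const ε x⟩ :
      {p : (ℝ → X) × (ℝ → ℝ) // Admissible ε x p.1 p.2}))
  have h : wedIntegrand φ ε (fun _ => x) (fun _ => 0) = fun _ => (p : EReal) := by
    funext t
    simp [wedIntegrand, hp]
  simp only [WEDfun]
  rw [h, eIntegral_coe (integrable_const p)]
  exact EReal.coe_ne_top _

/-- A minorant of slope `L` at `x` bounds `G_ε(x)` by a larger number, the hypothesis `hLL` saying
that `ε` is small enough for the gap to absorb the quadratic error. -/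
lemma Geps_le {X : Type*} [MetricSpace X] {φ : X → EReal} {x : X} {p L L' C ε : ℝ}
    (hp : φ x = p) (hL : 0 ≤ L) (hL' : 0 ≤ L') (hC : 0 ≤ C) (hε : 0 < ε) (hεC : 8 * C * ε < 1)
    (hLL : L ^ 2 ≤ L' ^ 2 * (1 - 8 * C * ε))
    (hφ : ∀ v, ((p - L * dist x v - C * dist x v ^ 2 : ℝ) : EReal) ≤ φ v) :
    Geps φ ε x ≤ ENNReal.ofReal L' := by
  rw [Geps, if_neg (Veps_ne_top hp hε)]
  have hV : ((p - ε * (L ^ 2 / (2 * (1 - 8 * C * ε))) : ℝ) : EReal) ≤ Veps φ ε x :=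
    le_iInf fun q => WEDfun_lower_bound hL hC hε hεC hφ q.2
  have hk : 0 < 1 - 8 * C * ε := by linarith
  have hdiff : φ x - Veps φ ε x ≤ ((ε * (L' ^ 2 / 2) : ℝ) : EReal) := by
    refine (EReal.sub_le_sub le_rfl hV).trans ?_
    rw [hp, ← EReal.coe_sub, EReal.coe_le_coe_iff]
    have : L ^ 2 / (2 * (1 - 8 * C * ε)) ≤ L' ^ 2 / 2 := by
      rw [div_le_div_iff₀ (by positivity) two_pos]
      linarith
    linarith [mul_le_mul_of_nonneg_left this hε.le]
  have hE := epos_mono hdiff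
  rw [epos_coe] at hE
  calc (2 * epos (φ x - Veps φ ε x) / ENNReal.ofReal ε) ^ (1 / 2 : ℝ)
      ≤ (ENNReal.ofReal L' ^ (2:ℝ)) ^ (1 / 2 : ℝ) := by
        refine ENNReal.rpow_le_rpow ?_ (by norm_num)
        rw [ENNReal.div_le_iff (by simpa using hε) ENNReal.ofReal_ne_top, ENNReal.rpow_two,
          ← ENNReal.ofReal_pow hL', ← ENNReal.ofReal_mul (by positivity)]
        calc 2 * epos (φ x - Veps φ ε x) ≤ ENNReal.ofReal 2 * ENNReal.ofReal (ε * (L' ^ 2 / 2)) := by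
              rw [ENNReal.ofReal_ofNat]
              gcongr
          _ = _ := by
              rw [← ENNReal.ofReal_mul (by norm_num)]
              congr 1
              ring
    _ = ENNReal.ofReal L' := by
        rw [← ENNReal.rpow_mul]
        norm_num

end WED
namespace WED

/-- Proposition 5.3: if `φ` is proper, lower semicontinuous and satisfies
the coercivity condition `φ(u) ≥ -B d²(u,v) - Q(v)`, then the WED slope is dominated by the
local slope: `|∂_w φ|(x) = limsup_{ε↓0} G_ε(x) ≤ |∂φ|(x)` for every `x ∈ D(φ)`. -/
theorem statement16
    {X : Type*} [MetricSpace X] [CompleteSpace X]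
    (φ : X → EReal) (hproper : ∃ x, φ x ≠ ⊤) (hne_bot : ∀ x, φ x ≠ ⊥)
    (hlsc : LowerSemicontinuous φ)
    (ustar : X) (A B : ℝ) (hA : 0 ≤ A) (hB : 0 ≤ B)
    (hcoercive : ∀ u v : X,
      ((-(B * dist u v ^ 2 + (B * dist v ustar ^ 2 + A)) : ℝ) : EReal) ≤ φ u)
    (x : X) (hx : φ x ≠ ⊤) :
    wedSlope φ x ≤ slope φ x := by
  obtain ⟨p, hp⟩ : ∃ p : ℝ, φ x = p := ⟨_, (EReal.coe_toReal hx (hne_bot x)).symm⟩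
  refine le_of_forall_gt_imp_ge_of_dense fun M hM => ?_
  rcases eq_or_ne M ⊤ with rfl | hMtop
  · exact le_top
  obtain ⟨N, hN1, hN2⟩ := exists_between hM
  have hNtop : N ≠ ⊤ := (hN2.trans_le le_top).ne
  have hLL : N.toReal < M.toReal := (ENNReal.toReal_lt_toReal hNtop hMtop).2 hN2
  have hN0 : 0 ≤ N.toReal := ENNReal.toReal_nonneg
  obtain ⟨C, hC, hmin⟩ := exists_minorant (L := N.toReal) hp hB hN0
    (fun v => hcoercive v x) (by rwa [ENNReal.ofReal_toReal hNtop])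
  have hlim : Tendsto (fun ε : ℝ => 8 * C * ε) (𝓝[>] 0) (𝓝 0) := by
    have : Tendsto (fun ε : ℝ => 8 * C * ε) (𝓝 0) (𝓝 (8 * C * 0)) :=
      (continuous_const.mul continuous_id).tendsto 0
    rw [mul_zero] at this
    exact this.mono_left nhdsWithin_le_nhds
  have hlim2 : Tendsto (fun ε : ℝ => M.toReal ^ 2 * (1 - 8 * C * ε)) (𝓝[>] 0)
      (𝓝 (M.toReal ^ 2)) := by
    simpa using (hlim.const_sub 1).const_mul (M.toReal ^ 2)
  have hsq : N.toReal ^ 2 < M.toReal ^ 2 := pow_lt_pow_left₀ hLL hN0 two_ne_zero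
  refine limsup_le_of_le (h := ?_)
  filter_upwards [hlim.eventually_lt_const one_pos, hlim2.eventually_const_lt hsq,
    self_mem_nhdsWithin] with ε h1 h2 hε
  have := Geps_le hp hN0 ENNReal.toReal_nonneg hC hε h1 h2.le hmin
  rwa [ENNReal.ofReal_toReal hMtop] at this

end WED
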